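/- arXiv:1605.06429 — 2 statements merged into one kernel-verified Lean document; each statement's English description precedes it below -/
import Mathlib

section
/- Smooth dependence of the optimal strategy on the uncertainty-aversion parameter: there exists ψ₁ > 0 such that for every (t,s,y) ∈ D one has w^ψ_yy(t,s,y) < 0 for all ψ ∈ (−ψ₁,ψ₁), and the function ϑ* : (−ψ₁,ψ₁) → ℝ defined by ϑ*(ψ) := V̄_s(t,s) − w^ψ_sy(t,s,y)/w^ψ_yy(t,s,y) is infinitely differentiable in ψ, satisfies w^ψ_sy(t,s,y) + (ϑ*(ψ) − V̄_s(t,s)) w^ψ_yy(t,s,y) = 0 for all ψ ∈ (−ψ₁,ψ₁), and satisfies ϑ*(0) = V̄_s(t,s) and (dϑ*/dψ)(0) = θ̃(t,s,y); moreover, for each ψ ∈ (0,ψ₁) and each ς ∈ [0,K], ϑ*(ψ) maximises ϑ ↦ H^ψ(t,s,y; ϑ, ς) over ℝ. -/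
open Set

/-- The data of the hedging problem with small uncertainty aversion: the constants
`T, K, ε, y_l, y_u`, the reference volatility `σ̄` (`sb`), the reference value `V̄` (`V`)
with its `s`-derivatives `Vs, Vss`, the penalty function `f` with its `ς`-derivatives
`f1, ..., f4`, the utility `U` with derivatives `U1, U2, U3`, and the correction terms
`w̃` (`wt`) and `ŵ` (`wh`) together with their partial derivatives. -/
structure HedgeData where
  T : ℝ
  K : ℝ
  eps : ℝ
  yl : ℝ
  yu : ℝ
  sb : ℝ → ℝ → ℝ
  V : ℝ → ℝ → ℝ
  Vs : ℝ → ℝ → ℝ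
  Vss : ℝ → ℝ → ℝ
  f : ℝ → ℝ → ℝ → ℝ → ℝ
  f1 : ℝ → ℝ → ℝ → ℝ → ℝ
  f2 : ℝ → ℝ → ℝ → ℝ → ℝ
  f3 : ℝ → ℝ → ℝ → ℝ → ℝ
  f4 : ℝ → ℝ → ℝ → ℝ → ℝ
  U : ℝ → ℝ
  U1 : ℝ → ℝ
  U2 : ℝ → ℝ
  U3 : ℝ → ℝ
  wt : ℝ → ℝ → ℝ → ℝ
  wtT : ℝ → ℝ → ℝ → ℝ
  wtS : ℝ → ℝ → ℝ → ℝ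
  wtY : ℝ → ℝ → ℝ → ℝ
  wtSS : ℝ → ℝ → ℝ → ℝ
  wtSY : ℝ → ℝ → ℝ → ℝ
  wtYY : ℝ → ℝ → ℝ → ℝ
  wh : ℝ → ℝ → ℝ → ℝ
  whT : ℝ → ℝ → ℝ → ℝ
  whS : ℝ → ℝ → ℝ → ℝ
  whY : ℝ → ℝ → ℝ → ℝ
  whSS : ℝ → ℝ → ℝ → ℝ
  whSY : ℝ → ℝ → ℝ → ℝ
  whYY : ℝ → ℝ → ℝ → ℝ

/-- The candidate value function `w^ψ(t,s,y) = U(y) - U'(y) w̃(t,s,y) ψ + U'(y) ŵ(t,s,y) ψ²`. -/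
noncomputable def HedgeData.wPsi (d : HedgeData) (ψ t s y : ℝ) : ℝ :=
  d.U y - d.U1 y * d.wt t s y * ψ + d.U1 y * d.wh t s y * ψ ^ 2

/-- Partial derivative `w^ψ_t`. -/
noncomputable def HedgeData.wPsiT (d : HedgeData) (ψ t s y : ℝ) : ℝ :=
  -(d.U1 y * d.wtT t s y) * ψ + d.U1 y * d.whT t s y * ψ ^ 2

/-- Partial derivative `w^ψ_y`. -/
noncomputable def HedgeData.wPsiY (d : HedgeData) (ψ t s y : ℝ) : ℝ :=
  d.U1 y - (d.U2 y * d.wt t s y + d.U1 y * d.wtY t s y) * ψ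
    + (d.U2 y * d.wh t s y + d.U1 y * d.whY t s y) * ψ ^ 2

/-- Partial derivative `w^ψ_ss`. -/
noncomputable def HedgeData.wPsiSS (d : HedgeData) (ψ t s y : ℝ) : ℝ :=
  -(d.U1 y * d.wtSS t s y) * ψ + d.U1 y * d.whSS t s y * ψ ^ 2

/-- Partial derivative `w^ψ_sy`. -/
noncomputable def HedgeData.wPsiSY (d : HedgeData) (ψ t s y : ℝ) : ℝ :=
  -(d.U2 y * d.wtS t s y + d.U1 y * d.wtSY t s y) * ψ
    + (d.U2 y * d.whS t s y + d.U1 y * d.whSY t s y) * ψ ^ 2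

/-- Partial derivative `w^ψ_yy`. -/
noncomputable def HedgeData.wPsiYY (d : HedgeData) (ψ t s y : ℝ) : ℝ :=
  d.U2 y - (d.U3 y * d.wt t s y + 2 * d.U2 y * d.wtY t s y + d.U1 y * d.wtYY t s y) * ψ
    + (d.U3 y * d.wh t s y + 2 * d.U2 y * d.whY t s y + d.U1 y * d.whYY t s y) * ψ ^ 2

/-- `σ̃(t,s,y) = σ̄(t,s) s² V̄_ss(t,s) / f''(t,s,y;σ̄(t,s))`. -/
noncomputable def HedgeData.sigmaTilde (d : HedgeData) (t s y : ℝ) : ℝ :=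
  d.sb t s * s ^ 2 * d.Vss t s / d.f2 t s y (d.sb t s)

/-- `θ̃(t,s,y) = w̃_s(t,s,y) + (U'(y)/U''(y)) w̃_sy(t,s,y)`. -/
noncomputable def HedgeData.thetaTilde (d : HedgeData) (t s y : ℝ) : ℝ :=
  d.wtS t s y + d.U1 y / d.U2 y * d.wtSY t s y

/-- The candidate volatility `σ^ψ = σ̄ + σ̃ ψ`. -/
noncomputable def HedgeData.sigmaPsi (d : HedgeData) (ψ t s y : ℝ) : ℝ :=
  d.sb t s + d.sigmaTilde t s y * ψ

/-- The candidate strategy `θ^ψ = V̄_s + θ̃ ψ`. -/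
noncomputable def HedgeData.thetaPsi (d : HedgeData) (ψ t s y : ℝ) : ℝ :=
  d.Vs t s + d.thetaTilde t s y * ψ

/-- The Hamiltonian `H^ψ(t,s,y;ϑ,ς)`. -/
noncomputable def HedgeData.Ham (d : HedgeData) (ψ t s y ϑ ς : ℝ) : ℝ :=
  1 / ψ * d.U1 y * d.f t s y ς
    + 1 / 2 * s ^ 2 * d.Vss t s * ((d.sb t s) ^ 2 - ς ^ 2) * d.wPsiY ψ t s y
    + 1 / 2 * ς ^ 2 * s ^ 2 *
      (d.wPsiSS ψ t s y + 2 * (ϑ - d.Vs t s) * d.wPsiSY ψ t s y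
        + (ϑ - d.Vs t s) ^ 2 * d.wPsiYY ψ t s y)

/-- The standing assumptions (Assumption 3.1 of the paper). -/
structure HedgeData.Assumptions (d : HedgeData) : Prop where
  hT : 0 < d.T
  hK : 1 < d.K
  heps : 0 < d.eps
  hy : d.yl < d.yu
  sb_mem : ∀ t ∈ Icc (0:ℝ) d.T, ∀ s ∈ Icc d.K⁻¹ d.K, d.sb t s ∈ Icc (0:ℝ) d.K
  sb_lb : ∀ t ∈ Icc (0:ℝ) d.T, ∀ s ∈ Ioo d.K⁻¹ d.K, d.eps ≤ d.sb t s
  sb_ub : ∀ t ∈ Icc (0:ℝ) d.T, ∀ s ∈ Ioo d.K⁻¹ d.K, d.sb t s ≤ d.K - d.eps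
  sb_bdry : ∀ t ∈ Icc (0:ℝ) d.T, d.sb t d.K⁻¹ = 0 ∧ d.sb t d.K = 0
  V_derivS : ∀ t ∈ Ioo (0:ℝ) d.T, ∀ s ∈ Ioo d.K⁻¹ d.K, HasDerivAt (d.V t) (d.Vs t s) s
  V_derivSS : ∀ t ∈ Ioo (0:ℝ) d.T, ∀ s ∈ Ioo d.K⁻¹ d.K, HasDerivAt (d.Vs t) (d.Vss t s) s
  Vss_cont : ∀ t ∈ Ioo (0:ℝ) d.T, ContinuousOn (d.Vss t) (Ioo d.K⁻¹ d.K)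
  Vss_bdd : ∀ t ∈ Ioo (0:ℝ) d.T, ∀ s ∈ Ioo d.K⁻¹ d.K, |s ^ 2 * d.Vss t s| ≤ d.K
  f_deriv1 : ∀ t s y ς : ℝ, HasDerivAt (d.f t s y) (d.f1 t s y ς) ς
  f_deriv2 : ∀ t s y ς : ℝ, HasDerivAt (d.f1 t s y) (d.f2 t s y ς) ς
  f_deriv3 : ∀ t s y ς : ℝ, HasDerivAt (d.f2 t s y) (d.f3 t s y ς) ς
  f_deriv4 : ∀ t s y ς : ℝ, HasDerivAt (d.f3 t s y) (d.f4 t s y ς) ς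
  f4_cont : ∀ t s y : ℝ, Continuous (d.f4 t s y)
  f_nonneg : ∀ t s y ς : ℝ, 0 ≤ ς → 0 ≤ d.f t s y ς
  f_min : ∀ t ∈ Ioo (0:ℝ) d.T, ∀ s ∈ Ioo d.K⁻¹ d.K, ∀ y ∈ Ioo d.yl d.yu,
    d.f t s y (d.sb t s) = 0 ∧ d.f1 t s y (d.sb t s) = 0
  f2_bdd : ∀ t ∈ Ioo (0:ℝ) d.T, ∀ s ∈ Ioo d.K⁻¹ d.K, ∀ y ∈ Ioo d.yl d.yu,
    ∀ ς ∈ Icc (0:ℝ) d.K, 1 / d.K ≤ d.f2 t s y ς ∧ d.f2 t s y ς ≤ d.K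
  f34_bdd : ∀ t ∈ Ioo (0:ℝ) d.T, ∀ s ∈ Ioo d.K⁻¹ d.K, ∀ y ∈ Ioo d.yl d.yu,
    ∀ ς ∈ Icc (0:ℝ) d.K, |d.f3 t s y ς| ≤ d.K ∧ |d.f4 t s y ς| ≤ d.K
  U_deriv1 : ∀ y : ℝ, HasDerivAt d.U (d.U1 y) y
  U_deriv2 : ∀ y : ℝ, HasDerivAt d.U1 (d.U2 y) y
  U_deriv3 : ∀ y : ℝ, HasDerivAt d.U2 (d.U3 y) y
  U3_cont : Continuous d.U3
  U1_pos : ∀ y : ℝ, 0 < d.U1 y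
  U2_neg : ∀ y : ℝ, d.U2 y < 0
  wt_cont : ContinuousOn (fun p : ℝ × ℝ × ℝ => d.wt p.1 p.2.1 p.2.2)
    (Icc 0 d.T ×ˢ Icc d.K⁻¹ d.K ×ˢ Icc d.yl d.yu)
  wh_cont : ContinuousOn (fun p : ℝ × ℝ × ℝ => d.wh p.1 p.2.1 p.2.2)
    (Icc 0 d.T ×ˢ Icc d.K⁻¹ d.K ×ˢ Icc d.yl d.yu)
  wt_deriv : ∀ t ∈ Ioo (0:ℝ) d.T, ∀ s ∈ Ioo d.K⁻¹ d.K, ∀ y ∈ Ioo d.yl d.yu,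
    HasDerivAt (fun t' => d.wt t' s y) (d.wtT t s y) t ∧
    HasDerivAt (fun s' => d.wt t s' y) (d.wtS t s y) s ∧
    HasDerivAt (fun y' => d.wt t s y') (d.wtY t s y) y ∧
    HasDerivAt (fun s' => d.wtS t s' y) (d.wtSS t s y) s ∧
    HasDerivAt (fun y' => d.wtS t s y') (d.wtSY t s y) y ∧
    HasDerivAt (fun y' => d.wtY t s y') (d.wtYY t s y) y
  wh_deriv : ∀ t ∈ Ioo (0:ℝ) d.T, ∀ s ∈ Ioo d.K⁻¹ d.K, ∀ y ∈ Ioo d.yl d.yu,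
    HasDerivAt (fun t' => d.wh t' s y) (d.whT t s y) t ∧
    HasDerivAt (fun s' => d.wh t s' y) (d.whS t s y) s ∧
    HasDerivAt (fun y' => d.wh t s y') (d.whY t s y) y ∧
    HasDerivAt (fun s' => d.whS t s' y) (d.whSS t s y) s ∧
    HasDerivAt (fun y' => d.whS t s y') (d.whSY t s y) y ∧
    HasDerivAt (fun y' => d.whY t s y') (d.whYY t s y) y
  wt_deriv_cont : ∀ g ∈ [d.wtT, d.wtS, d.wtY, d.wtSS, d.wtSY, d.wtYY],
    ContinuousOn (fun p : ℝ × ℝ × ℝ => g p.1 p.2.1 p.2.2)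
      (Ioo 0 d.T ×ˢ Ioo d.K⁻¹ d.K ×ˢ Ioo d.yl d.yu)
  wh_deriv_cont : ∀ g ∈ [d.whT, d.whS, d.whY, d.whSS, d.whSY, d.whYY],
    ContinuousOn (fun p : ℝ × ℝ × ℝ => g p.1 p.2.1 p.2.2)
      (Ioo 0 d.T ×ˢ Ioo d.K⁻¹ d.K ×ˢ Ioo d.yl d.yu)
  wt_bdd : ∀ g ∈ [d.wtT, d.wtS, d.wtY, d.wtSS, d.wtSY, d.wtYY],
    ∀ t ∈ Ioo (0:ℝ) d.T, ∀ s ∈ Ioo d.K⁻¹ d.K, ∀ y ∈ Ioo d.yl d.yu, |g t s y| ≤ d.K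
  wh_bdd : ∀ g ∈ [d.whT, d.whS, d.whY, d.whSS, d.whSY, d.whYY],
    ∀ t ∈ Ioo (0:ℝ) d.T, ∀ s ∈ Ioo d.K⁻¹ d.K, ∀ y ∈ Ioo d.yl d.yu, |g t s y| ≤ d.K

/-!
At `ψ = 0` the second derivative `w^ψ_yy` equals `U''`, which is bounded away from zero on a compact
range of `y`; the coefficients of `ψ` and `ψ²` in `w^ψ_yy` are uniformly bounded, so `w^ψ_yy` stays
negative for all small `ψ`, uniformly in `(t,s,y)`. The optimiser is then a quotient of polynomials
in `ψ` with nonvanishing denominator, whose numerator vanishes at `ψ = 0`. Optimality is completing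
the square in `ϑ`: `ϑ` enters the Hamiltonian only through a quadratic with leading coefficient
`½ ς² s² w^ψ_yy ≤ 0`.
-/

open scoped Topology

theorem exists_pos_forall_quadratic_neg {δ : ℝ} (hδ : 0 < δ) (B : ℝ) :
    ∃ r > 0, ∀ a b c x : ℝ, a ≤ -δ → |b| ≤ B → |c| ≤ B → x ∈ Ioo (-r) r →
      a - b * x + c * x ^ 2 < 0 := by
  have hcont : Continuous fun x : ℝ => B * |x| + B * x ^ 2 := by fun_prop
  have hsmall : ∀ᶠ x in 𝓝 (0 : ℝ), B * |x| + B * x ^ 2 < δ :=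
    hcont.continuousAt.eventually_lt_const (by simpa using hδ)
  obtain ⟨r, hr, hball⟩ := Metric.eventually_nhds_iff_ball.1 hsmall
  refine ⟨r, hr, fun a b c x ha hb hc hx => ?_⟩
  have hx' : B * |x| + B * x ^ 2 < δ := hball x (by simpa [Real.ball_eq_Ioo] using hx)
  have hlin : -(b * x) ≤ B * |x| :=
    calc -(b * x) ≤ |b * x| := neg_le_abs _
      _ = |b| * |x| := abs_mul b x
      _ ≤ B * |x| := by gcongr
  have hquad : c * x ^ 2 ≤ B * x ^ 2 := by
    gcongr
    exact (le_abs_self c).trans hc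
  linarith

-- With `uᵢ`, `vᵢ` the `i`-th derivatives of `u`, `v`, the bounded expression is `(u v)''`; the
-- coefficients of `w^ψ_yy` have this form, with `u = U'` and `v` one of `w̃`, `ŵ`.
theorem abs_leibniz_two_le {R : Type*} [CommRing R] [LinearOrder R] [IsStrictOrderedRing R]
    {u₀ u₁ u₂ v₀ v₁ v₂ A C : R}
    (hu : |u₀| ≤ A ∧ |u₁| ≤ A ∧ |u₂| ≤ A) (hv : |v₀| ≤ C ∧ |v₁| ≤ C ∧ |v₂| ≤ C) :
    |u₂ * v₀ + 2 * u₁ * v₁ + u₀ * v₂| ≤ 4 * (A * C) := by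
  have hA : 0 ≤ A := (abs_nonneg u₀).trans hu.1
  calc |u₂ * v₀ + 2 * u₁ * v₁ + u₀ * v₂|
      ≤ |u₂ * v₀| + |2 * u₁ * v₁| + |u₀ * v₂| := abs_add_three _ _ _
    _ = |u₂| * |v₀| + 2 * |u₁| * |v₁| + |u₀| * |v₂| := by simp only [abs_mul, abs_two]
    _ ≤ A * C + 2 * A * C + A * C := by
      gcongr
      exacts [hu.2.2, hv.1, hu.2.1, hv.2.1, hu.1, hv.2.2]
    _ = 4 * (A * C) := by ring

namespace HedgeData

/-- The open domain `D = (0,T) × (1/K,K) × (y_l,y_u)` of the hedging problem. -/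
def domain (d : HedgeData) : Set (ℝ × ℝ × ℝ) :=
  Ioo 0 d.T ×ˢ Ioo d.K⁻¹ d.K ×ˢ Ioo d.yl d.yu

/-- The optimal strategy `ϑ*(ψ) = V̄_s - w^ψ_sy / w^ψ_yy`, the stationary point of
`ϑ ↦ H^ψ(t,s,y;ϑ,ς)`. It takes the junk value `V̄_s` where `w^ψ_yy = 0`. -/
noncomputable def thetaStar (d : HedgeData) (ψ t s y : ℝ) : ℝ :=
  d.Vs t s - d.wPsiSY ψ t s y / d.wPsiYY ψ t s y

/-- The fields of `d` named after derivatives of `V̄`, `w̃`, `ŵ` (on `D`) and of `U` (everywhere)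
are these derivatives, which gives `w^ψ_y`, `w^ψ_ss`, `w^ψ_sy`, `w^ψ_yy` and the Hamiltonian their
meaning. Time derivatives enter none of these and are left out. -/
structure HasPartialsOn (d : HedgeData) (D : Set (ℝ × ℝ × ℝ)) : Prop where
  V : ∀ t s y, (t, s, y) ∈ D →
    HasDerivAt (d.V t) (d.Vs t s) s ∧ HasDerivAt (d.Vs t) (d.Vss t s) s
  U : ∀ y, HasDerivAt d.U (d.U1 y) y ∧ HasDerivAt d.U1 (d.U2 y) y ∧ HasDerivAt d.U2 (d.U3 y) y
  wt : ∀ t s y, (t, s, y) ∈ D →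
    HasDerivAt (fun s' => d.wt t s' y) (d.wtS t s y) s ∧
    HasDerivAt (fun y' => d.wt t s y') (d.wtY t s y) y ∧
    HasDerivAt (fun s' => d.wtS t s' y) (d.wtSS t s y) s ∧
    HasDerivAt (fun y' => d.wtS t s y') (d.wtSY t s y) y ∧
    HasDerivAt (fun y' => d.wtY t s y') (d.wtYY t s y) y
  wh : ∀ t s y, (t, s, y) ∈ D →
    HasDerivAt (fun s' => d.wh t s' y) (d.whS t s y) s ∧
    HasDerivAt (fun y' => d.wh t s y') (d.whY t s y) y ∧
    HasDerivAt (fun s' => d.whS t s' y) (d.whSS t s y) s ∧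
    HasDerivAt (fun y' => d.whS t s y') (d.whSY t s y) y ∧
    HasDerivAt (fun y' => d.whY t s y') (d.whYY t s y) y

section Utility

variable {d : HedgeData} {D : Set (ℝ × ℝ × ℝ)} {Y : Set ℝ}

theorem HasPartialsOn.continuous_U1 (hd : d.HasPartialsOn D) : Continuous d.U1 :=
  continuous_iff_continuousAt.2 fun y => (hd.U y).2.1.continuousAt

theorem HasPartialsOn.continuous_U2 (hd : d.HasPartialsOn D) : Continuous d.U2 :=
  continuous_iff_continuousAt.2 fun y => (hd.U y).2.2.continuousAt

theorem HasPartialsOn.exists_utility_bound (hd : d.HasPartialsOn D) (hY : IsCompact Y)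
    (hU3 : ContinuousOn d.U3 Y) :
    ∃ A, ∀ y ∈ Y, |d.U1 y| ≤ A ∧ |d.U2 y| ≤ A ∧ |d.U3 y| ≤ A := by
  obtain ⟨A, hA⟩ := hY.exists_bound_of_continuousOn <|
    hd.continuous_U1.continuousOn.prodMk (hd.continuous_U2.continuousOn.prodMk hU3)
  exact ⟨A, fun y hy => by simpa only [norm_prod_le_iff, Real.norm_eq_abs] using hA y hy⟩

theorem HasPartialsOn.exists_pos_forall_U2_le_neg (hd : d.HasPartialsOn D) (hY : IsCompact Y)
    (hU2 : ∀ y ∈ Y, d.U2 y < 0) :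
    ∃ δ > 0, ∀ y ∈ Y, d.U2 y ≤ -δ := by
  obtain ⟨δ, hδ, h⟩ := hY.exists_forall_le' hd.continuous_U2.neg.continuousOn (a := 0)
    fun y hy => neg_pos.2 (hU2 y hy)
  exact ⟨δ, hδ, fun y hy => le_neg.1 (h y hy)⟩

theorem HasPartialsOn.exists_pos_forall_wPsiYY_neg (hd : d.HasPartialsOn D) (hY : IsCompact Y)
    (hDY : ∀ t s y, (t, s, y) ∈ D → y ∈ Y)
    (hU3 : ContinuousOn d.U3 Y) (hU2 : ∀ y ∈ Y, d.U2 y < 0) {C : ℝ}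
    (hwt : ∀ t s y, (t, s, y) ∈ D → |d.wt t s y| ≤ C ∧ |d.wtY t s y| ≤ C ∧ |d.wtYY t s y| ≤ C)
    (hwh : ∀ t s y, (t, s, y) ∈ D → |d.wh t s y| ≤ C ∧ |d.whY t s y| ≤ C ∧ |d.whYY t s y| ≤ C) :
    ∃ r > 0, ∀ t s y, (t, s, y) ∈ D → ∀ ψ ∈ Ioo (-r) r, d.wPsiYY ψ t s y < 0 := by
  obtain ⟨A, hA⟩ := hd.exists_utility_bound hY hU3
  obtain ⟨δ, hδ, hU2δ⟩ := hd.exists_pos_forall_U2_le_neg hY hU2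
  obtain ⟨r, hr, hneg⟩ := exists_pos_forall_quadratic_neg hδ (4 * (A * C))
  refine ⟨r, hr, fun t s y hp ψ hψ => ?_⟩
  have hy : y ∈ Y := hDY t s y hp
  exact hneg _ _ _ ψ (hU2δ y hy) (abs_leibniz_two_le (hA y hy) (hwt t s y hp))
    (abs_leibniz_two_le (hA y hy) (hwh t s y hp)) hψ

end Utility

section OptimalStrategy

variable (d : HedgeData) (t s y : ℝ)

@[simp]
theorem wPsiSY_zero : d.wPsiSY 0 t s y = 0 := by
  simp [wPsiSY]

@[simp]
theorem wPsiYY_zero : d.wPsiYY 0 t s y = d.U2 y := by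
  simp [wPsiYY]

theorem thetaStar_zero : d.thetaStar 0 t s y = d.Vs t s := by
  simp [thetaStar]

theorem contDiff_wPsiSY {n : WithTop ℕ∞} : ContDiff ℝ n fun ψ => d.wPsiSY ψ t s y := by
  unfold wPsiSY
  fun_prop

theorem contDiff_wPsiYY {n : WithTop ℕ∞} : ContDiff ℝ n fun ψ => d.wPsiYY ψ t s y := by
  unfold wPsiYY
  fun_prop

theorem hasDerivAt_wPsiSY_zero :
    HasDerivAt (fun ψ => d.wPsiSY ψ t s y)
      (-(d.U2 y * d.wtS t s y + d.U1 y * d.wtSY t s y)) 0 := by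
  have hlin := (hasDerivAt_id (0 : ℝ)).const_mul (-(d.U2 y * d.wtS t s y + d.U1 y * d.wtSY t s y))
  have hquad := (hasDerivAt_pow 2 (0 : ℝ)).const_mul (d.U2 y * d.whS t s y + d.U1 y * d.whSY t s y)
  exact (hlin.add hquad).congr_deriv (by simp)

variable {d t s y}

theorem contDiffOn_thetaStar {S : Set ℝ} {n : WithTop ℕ∞}
    (h : ∀ ψ ∈ S, d.wPsiYY ψ t s y ≠ 0) :
    ContDiffOn ℝ n (fun ψ => d.thetaStar ψ t s y) S :=
  contDiffOn_const.sub <|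
    (d.contDiff_wPsiSY t s y).contDiffOn.div (d.contDiff_wPsiYY t s y).contDiffOn h

theorem hasDerivAt_thetaStar_zero (hU2 : d.U2 y ≠ 0) :
    HasDerivAt (fun ψ => d.thetaStar ψ t s y) (d.thetaTilde t s y) 0 := by
  have hYY : HasDerivAt (fun ψ => d.wPsiYY ψ t s y) _ 0 :=
    ((d.contDiff_wPsiYY t s y).differentiable one_ne_zero 0).hasDerivAt
  have hquot := ((d.hasDerivAt_wPsiSY_zero t s y).div hYY (by simpa using hU2)).const_sub (d.Vs t s)
  refine hquot.congr_deriv ?_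
  simp only [wPsiSY_zero, wPsiYY_zero, zero_mul, sub_zero, thetaTilde]
  field_simp

theorem wPsiSY_add_thetaStar_sub_mul_wPsiYY {ψ : ℝ} (h : d.wPsiYY ψ t s y ≠ 0) :
    d.wPsiSY ψ t s y + (d.thetaStar ψ t s y - d.Vs t s) * d.wPsiYY ψ t s y = 0 := by
  rw [thetaStar, sub_sub_cancel_left, neg_mul, div_mul_cancel₀ _ h, add_neg_cancel]

theorem Ham_eq_Ham_thetaStar_add {ψ : ℝ} (h : d.wPsiYY ψ t s y ≠ 0) (ϑ ς : ℝ) :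
    d.Ham ψ t s y ϑ ς = d.Ham ψ t s y (d.thetaStar ψ t s y) ς
      + 1 / 2 * ς ^ 2 * s ^ 2 * (d.wPsiYY ψ t s y * (ϑ - d.thetaStar ψ t s y) ^ 2) := by
  have hfoc := wPsiSY_add_thetaStar_sub_mul_wPsiYY h
  unfold Ham
  linear_combination ς ^ 2 * s ^ 2 * (ϑ - d.thetaStar ψ t s y) * hfoc

theorem Ham_le_Ham_thetaStar {ψ : ℝ} (h : d.wPsiYY ψ t s y < 0) (ϑ ς : ℝ) :
    d.Ham ψ t s y ϑ ς ≤ d.Ham ψ t s y (d.thetaStar ψ t s y) ς := by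
  rw [Ham_eq_Ham_thetaStar_add h.ne ϑ ς]
  have hsq : d.wPsiYY ψ t s y * (ϑ - d.thetaStar ψ t s y) ^ 2 ≤ 0 :=
    mul_nonpos_of_nonpos_of_nonneg h.le (sq_nonneg _)
  exact add_le_of_nonpos_right (mul_nonpos_of_nonneg_of_nonpos (by positivity) hsq)

end OptimalStrategy

namespace Assumptions

variable {d : HedgeData}

theorem hasPartialsOn_domain (hd : d.Assumptions) : d.HasPartialsOn d.domain where
  V t s _ hp := ⟨hd.V_derivS t hp.1 s hp.2.1, hd.V_derivSS t hp.1 s hp.2.1⟩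
  U y := ⟨hd.U_deriv1 y, hd.U_deriv2 y, hd.U_deriv3 y⟩
  wt t s y hp := (hd.wt_deriv t hp.1 s hp.2.1 y hp.2.2).2
  wh t s y hp := (hd.wh_deriv t hp.1 s hp.2.1 y hp.2.2).2

theorem exists_correction_bound (hd : d.Assumptions) :
    ∃ C, (∀ t s y, (t, s, y) ∈ d.domain →
        |d.wt t s y| ≤ C ∧ |d.wtY t s y| ≤ C ∧ |d.wtYY t s y| ≤ C) ∧
      ∀ t s y, (t, s, y) ∈ d.domain →
        |d.wh t s y| ≤ C ∧ |d.whY t s y| ≤ C ∧ |d.whYY t s y| ≤ C := by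
  have hcompact : IsCompact (Icc 0 d.T ×ˢ Icc d.K⁻¹ d.K ×ˢ Icc d.yl d.yu) :=
    isCompact_Icc.prod (isCompact_Icc.prod isCompact_Icc)
  have hsub : d.domain ⊆ Icc 0 d.T ×ˢ Icc d.K⁻¹ d.K ×ˢ Icc d.yl d.yu :=
    prod_mono Ioo_subset_Icc_self (prod_mono Ioo_subset_Icc_self Ioo_subset_Icc_self)
  obtain ⟨M, hM⟩ := hcompact.exists_bound_of_continuousOn (hd.wt_cont.prodMk hd.wh_cont)
  simp only [norm_prod_le_iff, Real.norm_eq_abs] at hM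
  refine ⟨max M d.K, fun t s y hp => ⟨?_, ?_, ?_⟩, fun t s y hp => ⟨?_, ?_, ?_⟩⟩
  · exact le_max_of_le_left (hM _ (hsub hp)).1
  · exact le_max_of_le_right (hd.wt_bdd d.wtY (by simp) t hp.1 s hp.2.1 y hp.2.2)
  · exact le_max_of_le_right (hd.wt_bdd d.wtYY (by simp) t hp.1 s hp.2.1 y hp.2.2)
  · exact le_max_of_le_left (hM _ (hsub hp)).2
  · exact le_max_of_le_right (hd.wh_bdd d.whY (by simp) t hp.1 s hp.2.1 y hp.2.2)
  · exact le_max_of_le_right (hd.wh_bdd d.whYY (by simp) t hp.1 s hp.2.1 y hp.2.2)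

end Assumptions

end HedgeData

theorem smooth_optimal_strategy_general (d : HedgeData) {D : Set (ℝ × ℝ × ℝ)}
    (hd : d.HasPartialsOn D) {Y : Set ℝ} (hY : IsCompact Y)
    (hDY : ∀ t s y, (t, s, y) ∈ D → y ∈ Y)
    (hU3 : ContinuousOn d.U3 Y) (hU2 : ∀ y ∈ Y, d.U2 y < 0) {C : ℝ}
    (hwt : ∀ t s y, (t, s, y) ∈ D → |d.wt t s y| ≤ C ∧ |d.wtY t s y| ≤ C ∧ |d.wtYY t s y| ≤ C)
    (hwh : ∀ t s y, (t, s, y) ∈ D → |d.wh t s y| ≤ C ∧ |d.whY t s y| ≤ C ∧ |d.whYY t s y| ≤ C) :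
    ∃ ψ₁ > (0 : ℝ), ∀ t s y, (t, s, y) ∈ D →
      (∀ ψ ∈ Ioo (-ψ₁) ψ₁, d.wPsiYY ψ t s y < 0) ∧
      ContDiffOn ℝ (⊤ : ℕ∞) (fun ψ => d.thetaStar ψ t s y) (Ioo (-ψ₁) ψ₁) ∧
      (∀ ψ ∈ Ioo (-ψ₁) ψ₁,
        d.wPsiSY ψ t s y + (d.thetaStar ψ t s y - d.Vs t s) * d.wPsiYY ψ t s y = 0) ∧
      d.thetaStar 0 t s y = d.Vs t s ∧
      HasDerivAt (fun ψ => d.thetaStar ψ t s y) (d.thetaTilde t s y) 0 ∧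
      ∀ ψ ∈ Ioo (-ψ₁) ψ₁, ψ ≠ 0 → ∀ ς ϑ : ℝ,
        d.Ham ψ t s y ϑ ς ≤ d.Ham ψ t s y (d.thetaStar ψ t s y) ς := by
  obtain ⟨ψ₁, hψ₁, hneg⟩ := hd.exists_pos_forall_wPsiYY_neg hY hDY hU3 hU2 hwt hwh
  refine ⟨ψ₁, hψ₁, fun t s y hp => ?_⟩
  have hYY := hneg t s y hp
  exact ⟨hYY, HedgeData.contDiffOn_thetaStar fun ψ hψ => (hYY ψ hψ).ne,
    fun ψ hψ => HedgeData.wPsiSY_add_thetaStar_sub_mul_wPsiYY (hYY ψ hψ).ne,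
    d.thetaStar_zero t s y, HedgeData.hasDerivAt_thetaStar_zero (hU2 y (hDY t s y hp)).ne,
    fun ψ hψ _ ς ϑ => HedgeData.Ham_le_Ham_thetaStar (hYY ψ hψ) ϑ ς⟩

/-- **Smooth dependence of the optimal strategy on the uncertainty-aversion parameter.**
There is `ψ₁ > 0` such that for every `(t,s,y) ∈ D`: `w^ψ_yy(t,s,y) < 0` for all
`ψ ∈ (-ψ₁,ψ₁)`; the function `ϑ*(ψ) := V̄_s(t,s) - w^ψ_sy/w^ψ_yy` is infinitely
differentiable on `(-ψ₁,ψ₁)`, satisfies the first-order condition, `ϑ*(0) = V̄_s(t,s)`,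
`(dϑ*/dψ)(0) = θ̃(t,s,y)`, and maximises `ϑ ↦ H^ψ(t,s,y;ϑ,ς)` over `ℝ` for each
`ψ ∈ (0,ψ₁)` and `ς ∈ [0,K]`. -/
theorem smooth_optimal_strategy (d : HedgeData) (hd : d.Assumptions) :
    ∃ ψ₁ > (0:ℝ),
      ∀ t ∈ Ioo (0:ℝ) d.T, ∀ s ∈ Ioo d.K⁻¹ d.K, ∀ y ∈ Ioo d.yl d.yu,
        (∀ ψ ∈ Ioo (-ψ₁) ψ₁, d.wPsiYY ψ t s y < 0) ∧
        ContDiffOn ℝ (⊤ : ℕ∞) (fun ψ => d.Vs t s - d.wPsiSY ψ t s y / d.wPsiYY ψ t s y)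
          (Ioo (-ψ₁) ψ₁) ∧
        (∀ ψ ∈ Ioo (-ψ₁) ψ₁,
          d.wPsiSY ψ t s y
            + ((d.Vs t s - d.wPsiSY ψ t s y / d.wPsiYY ψ t s y) - d.Vs t s)
              * d.wPsiYY ψ t s y = 0) ∧
        d.Vs t s - d.wPsiSY 0 t s y / d.wPsiYY 0 t s y = d.Vs t s ∧
        HasDerivAt (fun ψ => d.Vs t s - d.wPsiSY ψ t s y / d.wPsiYY ψ t s y)
          (d.thetaTilde t s y) 0 ∧
        (∀ ψ ∈ Ioo (0:ℝ) ψ₁, ∀ ς ∈ Icc (0:ℝ) d.K, ∀ ϑ : ℝ,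
          d.Ham ψ t s y ϑ ς
            ≤ d.Ham ψ t s y (d.Vs t s - d.wPsiSY ψ t s y / d.wPsiYY ψ t s y) ς) := by
  obtain ⟨C, hwt, hwh⟩ := hd.exists_correction_bound
  obtain ⟨ψ₁, hψ₁, h⟩ := smooth_optimal_strategy_general d hd.hasPartialsOn_domain
    (isCompact_Icc (a := d.yl) (b := d.yu)) (fun _ _ _ hp => Ioo_subset_Icc_self hp.2.2)
    hd.U3_cont.continuousOn (fun y _ => hd.U2_neg y) hwt hwh
  refine ⟨ψ₁, hψ₁, fun t ht s hs y hy => ?_⟩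
  obtain ⟨hneg, hsmooth, hfoc, hzero, hderiv, hmax⟩ := h t s y ⟨ht, hs, hy⟩
  exact ⟨hneg, hsmooth, hfoc, hzero, hderiv,
    fun ψ hψ ς _ ϑ => hmax ψ ⟨(neg_neg_of_pos hψ₁).trans hψ.1, hψ.2⟩ hψ.1.ne' ς ϑ⟩
end

section
/- Uniform derivative bounds for implicitly defined functions: there exists a constant M̃ > 0 such that for all λ ∈ Λ and all x ∈ U, |y_λ'(x)| ≤ M̃ (1 + M₁ |y_λ(x)|) and |y_λ''(x)| ≤ M̃ (1 + M₁ |y_λ(x)| + M₁ |y_λ(x)|²). -/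
open Set

/-!
Differentiating `F(x, y(x)) = 0` once and twice along the graph gives
`F_x + F_y y' = 0` and `(F_xx + 2 F_xy y' + F_yy y'²) + F_y y'' = 0`.
Both are linear in the highest derivative of `y`, with leading coefficient `F_y`, whose inverse is
bounded by `M₀`; hence `|y'|` is at most affine and `|y''|` at most quadratic in `M₁ |y|`.
The term `M₁² |y|²` is absorbed into a multiple of `M₁ |y|²` depending on `M₁`.
-/

section NormBounds

variable {𝕜 : Type*} [NormedDivisionRing 𝕜] {a b c d d₂ e : 𝕜} {M s : ℝ}

lemma norm_le_of_add_mul_eq_zero (hM : 0 < M) (hb : 1 / M ≤ ‖b‖) (h : a + b * d = 0) :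
    ‖d‖ ≤ M * ‖a‖ := by
  have hnorm : ‖a‖ = ‖b‖ * ‖d‖ := by rw [eq_neg_of_add_eq_zero_left h, norm_neg, norm_mul]
  have hone : 1 ≤ M * ‖b‖ := (div_le_iff₀' hM).1 hb
  calc ‖d‖ ≤ M * ‖b‖ * ‖d‖ := le_mul_of_one_le_left (norm_nonneg d) hone
    _ = M * ‖a‖ := by rw [hnorm, mul_assoc]

lemma norm_add_two_mul_add_mul_sq_le {A B C D : ℝ} (ha : ‖a‖ ≤ A) (hb : ‖b‖ ≤ B)
    (hc : ‖c‖ ≤ C) (hd : ‖d‖ ≤ D) :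
    ‖a + 2 * (b * d) + c * d ^ 2‖ ≤ A + 2 * (B * D) + C * D ^ 2 := by
  have hB : 0 ≤ B := (norm_nonneg b).trans hb
  have hC : 0 ≤ C := (norm_nonneg c).trans hc
  have hbd : ‖b * d‖ ≤ B * D := by rw [norm_mul]; gcongr
  have hcd : ‖c * d ^ 2‖ ≤ C * D ^ 2 := by rw [norm_mul, norm_pow]; gcongr
  rw [two_mul, two_mul]
  exact norm_add_le_of_le (norm_add_le_of_le ha (norm_add_le_of_le hbd hbd)) hcd

lemma add_le_mul_one_add (hM : 1 ≤ M) (hs : 0 ≤ s) : M + s ≤ M * (1 + s) := by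
  rw [mul_one_add]
  gcongr
  exact le_mul_of_one_le_left hs hM

lemma norm_le_of_first_order_eq (hM : 1 ≤ M) (hs : 0 ≤ s) (ha : ‖a‖ ≤ M + s)
    (hb : 1 / M ≤ ‖b‖) (h : a + b * d = 0) : ‖d‖ ≤ M ^ 2 * (1 + s) :=
  calc ‖d‖ ≤ M * ‖a‖ := norm_le_of_add_mul_eq_zero (by positivity) hb h
    _ ≤ M * (M * (1 + s)) := by gcongr; exact ha.trans (add_le_mul_one_add hM hs)
    _ = M ^ 2 * (1 + s) := by ring

lemma norm_le_of_second_order_eq (hM : 1 ≤ M) (hs : 0 ≤ s) (ha : ‖a‖ ≤ M + s)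
    (hb : ‖b‖ ≤ M) (hc : ‖c‖ ≤ M) (he : 1 / M ≤ ‖e‖) (hd : ‖d‖ ≤ M ^ 2 * (1 + s))
    (h : a + 2 * (b * d) + c * d ^ 2 + e * d₂ = 0) :
    ‖d₂‖ ≤ M ^ 6 * (3 * (1 + s) + (1 + s) ^ 2) :=
  have ha' : ‖a‖ ≤ M * (1 + s) := ha.trans (add_le_mul_one_add hM hs)
  calc ‖d₂‖ ≤ M * ‖a + 2 * (b * d) + c * d ^ 2‖ :=
        norm_le_of_add_mul_eq_zero (by positivity) he h
    _ ≤ M * (M * (1 + s) + 2 * (M * (M ^ 2 * (1 + s))) + M * (M ^ 2 * (1 + s)) ^ 2) := by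
        gcongr
        exact norm_add_two_mul_add_mul_sq_le ha' hb hc hd
    _ = M ^ 2 * (1 + s) + 2 * (M ^ 4 * (1 + s)) + M ^ 6 * (1 + s) ^ 2 := by ring
    _ ≤ M ^ 6 * (1 + s) + 2 * (M ^ 6 * (1 + s)) + M ^ 6 * (1 + s) ^ 2 := by
        gcongr <;> norm_num
    _ = M ^ 6 * (3 * (1 + s) + (1 + s) ^ 2) := by ring

lemma one_add_mul_sq_le {m t : ℝ} (hm : 0 ≤ m) (ht : 0 ≤ t) :
    (1 + m * t) ^ 2 ≤ (2 + m) * (1 + m * t + m * t ^ 2) := by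
  have hgap : 0 ≤ 1 + m + m ^ 2 * t + 2 * (m * t ^ 2) := by positivity
  linarith

end NormBounds

section ImplicitDerivatives

variable {𝕜 : Type*} [NontriviallyNormedField 𝕜]

/-- `G` is differentiable at `p` within `S` with partial derivatives `a` and `b`. Total (Fréchet)
differentiability is part of the notion, so that the chain rule along a graph is available. -/
def HasPartialsWithinAt (G : 𝕜 → 𝕜 → 𝕜) (a b : 𝕜) (S : Set (𝕜 × 𝕜)) (p : 𝕜 × 𝕜) : Prop :=
  HasFDerivWithinAt (fun q : 𝕜 × 𝕜 => G q.1 q.2)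
    (a • ContinuousLinearMap.fst 𝕜 𝕜 𝕜 + b • ContinuousLinearMap.snd 𝕜 𝕜 𝕜) S p

variable {U V : Set 𝕜} {x : 𝕜} {y y' : 𝕜 → 𝕜}

lemma HasPartialsWithinAt.hasDerivWithinAt_graph {G : 𝕜 → 𝕜 → 𝕜} {a b d : 𝕜}
    (hG : HasPartialsWithinAt G a b (U ×ˢ V) (x, y x)) (hyV : MapsTo y U V)
    (hy : HasDerivWithinAt y d U x) :
    HasDerivWithinAt (fun t => G t (y t)) (a + b * d) U x := by
  have hgraph : HasDerivWithinAt (fun t => (t, y t)) (1, d) U x :=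
    (hasDerivWithinAt_id x U).prodMk hy
  have hmaps : MapsTo (fun t => (t, y t)) U (U ×ˢ V) := fun t ht => ⟨ht, hyV ht⟩
  simpa [Function.comp_def] using
    HasFDerivWithinAt.comp_hasDerivWithinAt (f := fun t => (t, y t)) x hG hgraph hmaps

lemma eq_zero_of_hasDerivWithinAt_of_forall_eq_zero {E : Type*} [NormedAddCommGroup E]
    [NormedSpace 𝕜 E] {g : 𝕜 → E} {d : E} (hU : UniqueDiffWithinAt 𝕜 U x) (hx : x ∈ U)
    (hg : HasDerivWithinAt g d U x) (hzero : ∀ t ∈ U, g t = 0) : d = 0 :=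
  hU.eq_deriv U hg ((hasDerivWithinAt_const x U 0).congr hzero (hzero x hx))

lemma implicit_deriv_eq {F : 𝕜 → 𝕜 → 𝕜} {a b d : 𝕜} (hU : UniqueDiffWithinAt 𝕜 U x)
    (hx : x ∈ U) (hyV : MapsTo y U V) (hy : HasDerivWithinAt y d U x)
    (hF : HasPartialsWithinAt F a b (U ×ˢ V) (x, y x)) (hzero : ∀ t ∈ U, F t (y t) = 0) :
    a + b * d = 0 :=
  eq_zero_of_hasDerivWithinAt_of_forall_eq_zero hU hx (hF.hasDerivWithinAt_graph hyV hy) hzero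

lemma implicit_deriv_deriv_eq {Fx Fy : 𝕜 → 𝕜 → 𝕜} {fxx fxy fyy d₂ : 𝕜}
    (hU : UniqueDiffWithinAt 𝕜 U x) (hx : x ∈ U) (hyV : MapsTo y U V)
    (hy : HasDerivWithinAt y (y' x) U x) (hy' : HasDerivWithinAt y' d₂ U x)
    (hFx : HasPartialsWithinAt Fx fxx fxy (U ×ˢ V) (x, y x))
    (hFy : HasPartialsWithinAt Fy fxy fyy (U ×ˢ V) (x, y x))
    (hzero : ∀ t ∈ U, Fx t (y t) + Fy t (y t) * y' t = 0) :
    fxx + 2 * (fxy * y' x) + fyy * y' x ^ 2 + Fy x (y x) * d₂ = 0 := by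
  have hderiv := eq_zero_of_hasDerivWithinAt_of_forall_eq_zero hU hx
    ((hFx.hasDerivWithinAt_graph hyV hy).add ((hFy.hasDerivWithinAt_graph hyV hy).mul hy')) hzero
  linear_combination hderiv

theorem implicit_function_bounds_general {Λ : Type*} {F Fx Fy Fxx Fxy Fyy : Λ → 𝕜 → 𝕜 → 𝕜}
    {y y' y'' : Λ → 𝕜 → 𝕜} {M₀ M₁ : ℝ} (hU : UniqueDiffOn 𝕜 U) (hM₀ : 1 ≤ M₀) (hM₁ : 0 ≤ M₁)
    (hyV : ∀ l, MapsTo (y l) U V)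
    (hy : ∀ l, ∀ x ∈ U, HasDerivWithinAt (y l) (y' l x) U x)
    (hy' : ∀ l, ∀ x ∈ U, HasDerivWithinAt (y' l) (y'' l x) U x)
    (hzero : ∀ l, ∀ x ∈ U, F l x (y l x) = 0)
    (hF : ∀ l, ∀ x ∈ U, ∀ v ∈ V,
      HasPartialsWithinAt (F l) (Fx l x v) (Fy l x v) (U ×ˢ V) (x, v))
    (hFx : ∀ l, ∀ x ∈ U, ∀ v ∈ V,
      HasPartialsWithinAt (Fx l) (Fxx l x v) (Fxy l x v) (U ×ˢ V) (x, v))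
    (hFy : ∀ l, ∀ x ∈ U, ∀ v ∈ V,
      HasPartialsWithinAt (Fy l) (Fxy l x v) (Fyy l x v) (U ×ˢ V) (x, v))
    (hFx_le : ∀ l, ∀ x ∈ U, ∀ v ∈ V, ‖Fx l x v‖ ≤ M₀ + M₁ * ‖v‖)
    (hFxx_le : ∀ l, ∀ x ∈ U, ∀ v ∈ V, ‖Fxx l x v‖ ≤ M₀ + M₁ * ‖v‖)
    (hFxy_le : ∀ l, ∀ x ∈ U, ∀ v ∈ V, ‖Fxy l x v‖ ≤ M₀)
    (hFyy_le : ∀ l, ∀ x ∈ U, ∀ v ∈ V, ‖Fyy l x v‖ ≤ M₀)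
    (hFy_ge : ∀ l, ∀ x ∈ U, ∀ v ∈ V, 1 / M₀ ≤ ‖Fy l x v‖) :
    ∃ M > (0 : ℝ), ∀ l, ∀ x ∈ U,
      ‖y' l x‖ ≤ M * (1 + M₁ * ‖y l x‖) ∧
      ‖y'' l x‖ ≤ M * (1 + M₁ * ‖y l x‖ + M₁ * ‖y l x‖ ^ 2) := by
  refine ⟨M₀ ^ 6 * (5 + M₁), by positivity, fun l x hx => ?_⟩
  have hv : y l x ∈ V := hyV l hx
  have hs : 0 ≤ M₁ * ‖y l x‖ := by positivity
  have hfirst : ∀ t ∈ U, Fx l t (y l t) + Fy l t (y l t) * y' l t = 0 := fun t ht =>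
    implicit_deriv_eq (hU t ht) ht (hyV l) (hy l t ht) (hF l t ht _ (hyV l ht)) (hzero l)
  have hsecond := implicit_deriv_deriv_eq (hU x hx) hx (hyV l) (hy l x hx) (hy' l x hx)
    (hFx l x hx _ hv) (hFy l x hx _ hv) hfirst
  have hy'_le : ‖y' l x‖ ≤ M₀ ^ 2 * (1 + M₁ * ‖y l x‖) :=
    norm_le_of_first_order_eq hM₀ hs (hFx_le l x hx _ hv) (hFy_ge l x hx _ hv) (hfirst x hx)
  have hy''_le := norm_le_of_second_order_eq hM₀ hs (hFxx_le l x hx _ hv) (hFxy_le l x hx _ hv)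
    (hFyy_le l x hx _ hv) (hFy_ge l x hx _ hv) hy'_le hsecond
  constructor
  · have hconst : M₀ ^ 2 ≤ M₀ ^ 6 * (5 + M₁) :=
      (pow_le_pow_right₀ hM₀ (by norm_num)).trans
        (le_mul_of_one_le_right (by positivity) (by linarith))
    exact hy'_le.trans (by gcongr)
  · refine hy''_le.trans ?_
    rw [mul_assoc]
    gcongr
    have hsq : 0 ≤ M₁ * ‖y l x‖ ^ 2 := by positivity
    linarith [one_add_mul_sq_le hM₁ (norm_nonneg (y l x))]

end ImplicitDerivatives

/-- **Uniform derivative bounds for implicitly defined functions.**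
Let `Λ` be a nonempty set, `U, V ⊆ ℝ` open, and for each `λ ∈ Λ` let
`F_λ : U × V → ℝ` and `y_λ : U → V` be twice continuously differentiable with
`F_λ(x, y_λ(x)) = 0` on `U`.  If `|∂F/∂x|, |∂²F/∂x²| ≤ M₀ + M₁|y|`,
`|∂²F/∂x∂y|, |∂²F/∂y²| ≤ M₀` and `|∂F/∂y| ≥ 1/M₀` uniformly, then there is `M̃ > 0` with
`|y_λ'(x)| ≤ M̃(1 + M₁|y_λ(x)|)` and `|y_λ''(x)| ≤ M̃(1 + M₁|y_λ(x)| + M₁|y_λ(x)|²)`. -/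
theorem implicit_function_bounds
    {Λ : Type*} [Nonempty Λ]
    (U V : Set ℝ) (hUopen : IsOpen U) (hVopen : IsOpen V)
    (F Fx Fy Fxx Fxy Fyy : Λ → ℝ → ℝ → ℝ)
    (y y' y'' : Λ → ℝ → ℝ)
    (M₀ M₁ : ℝ) (hM₀ : 1 < M₀) (hM₁ : 0 ≤ M₁)
    (hymem : ∀ l : Λ, ∀ x ∈ U, y l x ∈ V)
    (hy1 : ∀ l : Λ, ∀ x ∈ U, HasDerivAt (y l) (y' l x) x)
    (hy2 : ∀ l : Λ, ∀ x ∈ U, HasDerivAt (y' l) (y'' l x) x)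
    (hy2cont : ∀ l : Λ, ContinuousOn (y'' l) U)
    (hFzero : ∀ l : Λ, ∀ x ∈ U, F l x (y l x) = 0)
    (hF1 : ∀ l : Λ, ∀ x ∈ U, ∀ v ∈ V,
      HasFDerivAt (fun p : ℝ × ℝ => F l p.1 p.2)
        (Fx l x v • ContinuousLinearMap.fst ℝ ℝ ℝ
          + Fy l x v • ContinuousLinearMap.snd ℝ ℝ ℝ) (x, v))
    (hF2x : ∀ l : Λ, ∀ x ∈ U, ∀ v ∈ V,
      HasFDerivAt (fun p : ℝ × ℝ => Fx l p.1 p.2)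
        (Fxx l x v • ContinuousLinearMap.fst ℝ ℝ ℝ
          + Fxy l x v • ContinuousLinearMap.snd ℝ ℝ ℝ) (x, v))
    (hF2y : ∀ l : Λ, ∀ x ∈ U, ∀ v ∈ V,
      HasFDerivAt (fun p : ℝ × ℝ => Fy l p.1 p.2)
        (Fxy l x v • ContinuousLinearMap.fst ℝ ℝ ℝ
          + Fyy l x v • ContinuousLinearMap.snd ℝ ℝ ℝ) (x, v))
    (hF2cont : ∀ l : Λ, ∀ g ∈ [Fxx l, Fxy l, Fyy l],
      ContinuousOn (fun p : ℝ × ℝ => g p.1 p.2) (U ×ˢ V))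
    (hFx : ∀ l : Λ, ∀ x ∈ U, ∀ v ∈ V, |Fx l x v| ≤ M₀ + M₁ * |v|)
    (hFxx : ∀ l : Λ, ∀ x ∈ U, ∀ v ∈ V, |Fxx l x v| ≤ M₀ + M₁ * |v|)
    (hFxy : ∀ l : Λ, ∀ x ∈ U, ∀ v ∈ V, |Fxy l x v| ≤ M₀)
    (hFyy : ∀ l : Λ, ∀ x ∈ U, ∀ v ∈ V, |Fyy l x v| ≤ M₀)
    (hFy : ∀ l : Λ, ∀ x ∈ U, ∀ v ∈ V, 1 / M₀ ≤ |Fy l x v|) :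
    ∃ M > (0:ℝ), ∀ l : Λ, ∀ x ∈ U,
      |y' l x| ≤ M * (1 + M₁ * |y l x|) ∧
      |y'' l x| ≤ M * (1 + M₁ * |y l x| + M₁ * |y l x| ^ 2) :=
  implicit_function_bounds_general hUopen.uniqueDiffOn hM₀.le hM₁ hymem
    (fun l x hx => (hy1 l x hx).hasDerivWithinAt) (fun l x hx => (hy2 l x hx).hasDerivWithinAt)
    hFzero (fun l x hx v hv => (hF1 l x hx v hv).hasFDerivWithinAt)
    (fun l x hx v hv => (hF2x l x hx v hv).hasFDerivWithinAt)
    (fun l x hx v hv => (hF2y l x hx v hv).hasFDerivWithinAt) hFx hFxx hFxy hFyy hFy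
end
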